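/- Let R be a commutative noetherian ring, N a pure-injective R-module, i ≥ 0 an integer, and M an R-module. Then Ext^i_R(M, N) = 0 if and only if Ext^i_R(M, Hom_R(R_m, N)) = 0 for every maximal ideal m of R. -/

import Mathlib

open CategoryTheory Opposite

noncomputable section

/-- Vanishing of the `n`-th Ext group of two `R`-modules. -/
def extV (R : Type) [Ring R] (M N : ModuleCat.{0} R) (n : ℕ) : Prop :=
  Subsingleton (((_root_.Ext ℤ (ModuleCat.{0} R) n).obj (op M)).obj N)

/-- `f : A →ₗ[R] B` is a pure monomorphism: it is injective and stays injective
after tensoring with any `R`-module. -/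
def IsPureMono (R : Type) [CommRing R] {A B : Type} [AddCommGroup A] [Module R A]
    [AddCommGroup B] [Module R B] (f : A →ₗ[R] B) : Prop :=
  Function.Injective f ∧
    ∀ (Q : Type) [AddCommGroup Q] [Module R Q], Function.Injective (LinearMap.lTensor Q f)

/-- An `R`-module `N` is pure-injective if it is injective with respect to
pure monomorphisms. -/
def PureInjective (R : Type) [CommRing R] (N : Type) [AddCommGroup N] [Module R N] : Prop :=
  ∀ (A B : Type) [AddCommGroup A] [Module R A] [AddCommGroup B] [Module R B]
    (f : A →ₗ[R] B), IsPureMono R f → ∀ g : A →ₗ[R] N, ∃ h : B →ₗ[R] N, h.comp f = g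

section keyLemma

variable {R : Type} [CommRing R]

/-- Vanishing of the derived-category Ext. -/
def EV (R : Type) [CommRing R] (M E : Type) [AddCommGroup M] [Module R M]
    [AddCommGroup E] [Module R E] (j : ℕ) : Prop :=
  Subsingleton (CategoryTheory.Abelian.Ext (ModuleCat.of R M) (ModuleCat.of R E) j)

variable {A B C E : Type} [AddCommGroup A] [Module R A] [AddCommGroup B] [Module R B]
  [AddCommGroup C] [Module R C] [AddCommGroup E] [Module R E]

lemma EV_zero_iff : EV R A E 0 ↔ ∀ f : A →ₗ[R] E, f = 0 := by
  unfold EV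
  rw [(CategoryTheory.Abelian.Ext.homEquiv₀).subsingleton_congr]
  constructor
  · intro h f
    have := Subsingleton.elim (ModuleCat.ofHom f) 0
    exact congrArg ModuleCat.Hom.hom this
  · intro h
    refine ⟨fun f g => ?_⟩
    ext1
    rw [h f.hom, h g.hom]

lemma mkSES (f : A →ₗ[R] B) (g : B →ₗ[R] C) (hf : Function.Injective f)
    (hg : Function.Surjective g) (h : Function.Exact f g) :
    (ShortComplex.mk (ModuleCat.ofHom f) (ModuleCat.ofHom g)
      (by ext x; exact h.apply_apply_eq_zero x)).ShortExact where
  exact := by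
    rw [ShortComplex.ShortExact.moduleCat_exact_iff_function_exact]
    exact h
  mono_f := by rw [ModuleCat.mono_iff_injective]; exact hf
  epi_g := by rw [ModuleCat.epi_iff_surjective]; exact hg

open CategoryTheory.Abelian in
lemma EV_ses2 (f : A →ₗ[R] B) (g : B →ₗ[R] C) (hf : Function.Injective f)
    (hg : Function.Surjective g) (h : Function.Exact f g) {j : ℕ} (hA : EV R A E j)
    (hC : EV R C E j) : EV R B E j := by
  unfold EV at *
  refine subsingleton_of_forall_eq 0 fun x => ?_
  obtain ⟨y, rfl⟩ := Ext.contravariant_sequence_exact₂ (mkSES f g hf hg h) _ x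
    (Subsingleton.elim (α := Ext (ModuleCat.of R A) (ModuleCat.of R E) j) _ _)
  rw [Subsingleton.elim (α := Ext (ModuleCat.of R C) (ModuleCat.of R E) j) y 0]
  apply Ext.comp_zero

open CategoryTheory.Abelian in
lemma EV_ses3 (f : A →ₗ[R] B) (g : B →ₗ[R] C) (hf : Function.Injective f)
    (hg : Function.Surjective g) (h : Function.Exact f g) {j : ℕ} (hA : EV R A E j)
    (hB : EV R B E (j+1)) : EV R C E (j+1) := by
  unfold EV at *
  refine subsingleton_of_forall_eq 0 fun x => ?_
  obtain ⟨y, rfl⟩ := Ext.contravariant_sequence_exact₃ (mkSES f g hf hg h) _ x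
    (Subsingleton.elim (α := Ext (ModuleCat.of R B) (ModuleCat.of R E) (j+1)) _ _) (add_comm 1 j)
  rw [Subsingleton.elim (α := Ext (ModuleCat.of R A) (ModuleCat.of R E) j) y 0]
  apply Ext.comp_zero

open CategoryTheory.Abelian in
lemma EV_ses1 (f : A →ₗ[R] B) (g : B →ₗ[R] C) (hf : Function.Injective f)
    (hg : Function.Surjective g) (h : Function.Exact f g) {j : ℕ} (hB : EV R B E j)
    (hC : EV R C E (j+1)) : EV R A E j := by
  unfold EV at *
  refine subsingleton_of_forall_eq 0 fun x => ?_
  obtain ⟨y, rfl⟩ := Ext.contravariant_sequence_exact₁ (mkSES f g hf hg h) _ x (add_comm 1 j)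
    (Subsingleton.elim (α := Ext (ModuleCat.of R C) (ModuleCat.of R E) (j+1)) _ _)
  rw [Subsingleton.elim (α := Ext (ModuleCat.of R B) (ModuleCat.of R E) j) y 0]
  apply Ext.comp_zero

open CategoryTheory.Abelian in
lemma EV_one_of_ext (f : A →ₗ[R] B) (g : B →ₗ[R] C) (hf : Function.Injective f)
    (hg : Function.Surjective g) (h : Function.Exact f g)
    (hA : ∀ u : A →ₗ[R] E, ∃ v : B →ₗ[R] E, v.comp f = u)
    (hB : EV R B E 1) : EV R C E 1 := by
  unfold EV at *
  refine subsingleton_of_forall_eq 0 fun x => ?_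
  obtain ⟨y, rfl⟩ := Ext.contravariant_sequence_exact₃ (mkSES f g hf hg h) _ x
    (Subsingleton.elim (α := Ext (ModuleCat.of R B) (ModuleCat.of R E) 1) _ _) (add_comm 1 0)
  obtain ⟨u, rfl⟩ := Ext.homEquiv₀.symm.surjective y
  obtain ⟨v, hv⟩ := hA u.hom
  have : u = ModuleCat.ofHom f ≫ ModuleCat.ofHom v := by
    ext1; exact hv.symm
  subst this
  change (mkSES f g hf hg h).extClass.comp (Ext.mk₀ _) _ = 0
  rw [← Ext.mk₀_comp_mk₀]
  exact (mkSES f g hf hg h).extClass_comp_assoc _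

open CategoryTheory.Abelian in
lemma ext_of_EV_one (f : A →ₗ[R] B) (g : B →ₗ[R] C) (hf : Function.Injective f)
    (hg : Function.Surjective g) (h : Function.Exact f g)
    (hC : EV R C E 1) (u : A →ₗ[R] E) : ∃ v : B →ₗ[R] E, v.comp f = u := by
  unfold EV at *
  obtain ⟨y, hy⟩ := Ext.contravariant_sequence_exact₁ (mkSES f g hf hg h) _
    (Ext.mk₀ (ModuleCat.ofHom u)) (add_comm 1 0)
    (Subsingleton.elim (α := Ext (ModuleCat.of R C) (ModuleCat.of R E) 1) _ _)
  obtain ⟨v, rfl⟩ := Ext.homEquiv₀.symm.surjective y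
  refine ⟨v.hom, ?_⟩
  change (Ext.mk₀ _).comp (Ext.mk₀ _) _ = _ at hy
  rw [Ext.mk₀_comp_mk₀] at hy
  have := Ext.homEquiv₀.symm.injective hy
  exact congrArg ModuleCat.Hom.hom this

lemma EV_proj [Module.Projective R A] (j : ℕ) : EV R A E (j+1) := by
  have : Projective (ModuleCat.of R A) :=
    (IsProjective.iff_projective (R := R) A).mp inferInstance
  exact CategoryTheory.Abelian.Ext.subsingleton_of_projective _ _ _

/-- the free cover -/
abbrev cov (R M : Type) [CommRing R] [AddCommGroup M] [Module R M] : (M →₀ R) →ₗ[R] M :=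
  Finsupp.linearCombination R id

lemma cov_surj (M : Type) [AddCommGroup M] [Module R M] : Function.Surjective (cov R M) :=
  Finsupp.linearCombination_id_surjective R M

lemma dfin_ses {ι : Type} {K P M : ι → Type} [∀ i, AddCommGroup (K i)]
    [∀ i, Module R (K i)] [∀ i, AddCommGroup (P i)] [∀ i, Module R (P i)]
    [∀ i, AddCommGroup (M i)] [∀ i, Module R (M i)] (f : ∀ i, K i →ₗ[R] P i)
    (g : ∀ i, P i →ₗ[R] M i) (hf : ∀ i, Function.Injective (f i))
    (hg : ∀ i, Function.Surjective (g i)) (h : ∀ i, Function.Exact (f i) (g i)) :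
      Function.Injective (DFinsupp.mapRange.linearMap f)
      ∧ Function.Surjective (DFinsupp.mapRange.linearMap g)
      ∧ Function.Exact (DFinsupp.mapRange.linearMap f) (DFinsupp.mapRange.linearMap g) := by
  classical
  refine ⟨?_, ?_, ?_⟩
  · intro x y hxy
    ext i : 1
    have := DFunLike.congr_fun hxy i
    exact hf i (by simpa using this)
  · exact (DFinsupp.mapRange_surjective _ (fun i => map_zero _)).2 hg
  · intro x
    constructor
    · intro hx
      have hx' : ∀ i, ∃ y, f i y = x i := fun i =>
        (h i (x i)).1 (by simpa using DFunLike.congr_fun hx i)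
      choose y hy using hx'
      refine ⟨DFinsupp.mk x.support (fun i => y i), ?_⟩
      ext i : 1
      by_cases hi : i ∈ x.support
      · simp only [DFinsupp.mapRange.linearMap_apply, DFinsupp.mapRange_apply,
          DFinsupp.mk_of_mem hi]
        exact hy i
      · simp only [DFinsupp.mapRange.linearMap_apply, DFinsupp.mapRange_apply,
          DFinsupp.mk_of_notMem hi]
        simp at hi
        rw [hi, map_zero]
    · rintro ⟨y, rfl⟩
      ext i : 1
      simpa using (h i).apply_apply_eq_zero (y i)

lemma EV_dfin_step {ι : Type} {K P M : ι → Type} [∀ i, AddCommGroup (K i)]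
    [∀ i, Module R (K i)] [∀ i, AddCommGroup (P i)] [∀ i, Module R (P i)]
    [∀ i, AddCommGroup (M i)] [∀ i, Module R (M i)] (f : ∀ i, K i →ₗ[R] P i)
    (g : ∀ i, P i →ₗ[R] M i) (hf : ∀ i, Function.Injective (f i))
    (hg : ∀ i, Function.Surjective (g i)) (h : ∀ i, Function.Exact (f i) (g i))
    [∀ i, Module.Projective R (P i)] (j : ℕ)
    (ih : (∀ i, EV R (K i) E j) → EV R (Π₀ i, K i) E j) (hM : ∀ i, EV R (M i) E (j+1)) :
    EV R (Π₀ i, M i) E (j+1) := by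
  classical
  obtain ⟨h1, h2, h3⟩ := dfin_ses f g hf hg h
  have : Module.Projective R (Π₀ i, P i) :=
    inferInstanceAs (Module.Projective R (DirectSum ι P))
  cases j with
  | zero =>
    refine EV_one_of_ext _ _ h1 h2 h3 ?_ (EV_proj 0)
    intro u
    have : ∀ i, ∃ v : P i →ₗ[R] E, v.comp (f i) = u.comp (DFinsupp.lsingle i) := fun i =>
      ext_of_EV_one (f i) (g i) (hf i) (hg i) (h i) (hM i) _
    choose v hv using this
    refine ⟨DFinsupp.lsum ℕ v, ?_⟩
    apply DFinsupp.lhom_ext'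
    intro i
    rw [← hv i]
    ext x
    simp
  | succ j =>
    exact EV_ses3 _ _ h1 h2 h3 (ih fun i =>
      EV_ses1 (f i) (g i) (hf i) (hg i) (h i) (EV_proj _) (hM i)) (EV_proj _)

lemma EV_dfinsupp (j : ℕ) : ∀ (ι : Type) (M : ι → Type) [∀ i, AddCommGroup (M i)]
    [∀ i, Module R (M i)], (∀ i, EV R (M i) E j) → EV R (Π₀ i, M i) E j := by
  classical
  induction j with
  | zero =>
    intro ι M _ _ h
    rw [EV_zero_iff]
    intro f
    apply DFinsupp.lhom_ext'
    intro i
    exact (EV_zero_iff.1 (h i)) _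
  | succ j ih =>
    intro ι M _ _ h
    exact EV_dfin_step (K := fun i => ↥(LinearMap.ker (cov R (M i)))) (P := fun i => M i →₀ R) (fun i => (LinearMap.ker (cov R (M i))).subtype) (fun i => cov R (M i))
      (fun i => Submodule.injective_subtype _) (fun i => cov_surj _)
      (fun i => LinearMap.exact_subtype_ker_map _) j (fun h => ih ι _ h) h

lemma flat_ker {F P : Type} [AddCommGroup F] [Module R F] [AddCommGroup P] [Module R P]
    [Module.Flat R F] [Module.Flat R P] (g : P →ₗ[R] F) (hg : Function.Surjective g) :
    Module.Flat R (LinearMap.ker g) := by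
  rw [Module.Flat.iff_rTensor_injective']
  intro I
  have h1 : Function.Injective ((LinearMap.ker g).subtype.lTensor I) :=
    LinearMap.lTensor_injective_of_exact_of_flat g hg _ (Submodule.injective_subtype _)
      (LinearMap.exact_subtype_ker_map _) I
  have h2 : Function.Injective (I.subtype.rTensor P) :=
    Module.Flat.rTensor_preserves_injective_linearMap _ (Submodule.injective_subtype _)
  have h3 : Function.Injective ((I.subtype.rTensor P).comp ((LinearMap.ker g).subtype.lTensor I)) :=
    h2.comp h1
  rw [LinearMap.rTensor_comp_lTensor, ← LinearMap.lTensor_comp_rTensor] at h3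
  exact Function.Injective.of_comp h3

lemma EV_flat (hE : PureInjective R E) (j : ℕ) : ∀ (F : Type) [AddCommGroup F] [Module R F]
    [Module.Flat R F], EV R F E (j+1) := by
  induction j with
  | zero =>
    intro F _ _ _
    refine EV_one_of_ext (A := LinearMap.ker (cov R F)) (B := F →₀ R) (LinearMap.ker (cov R F)).subtype (cov R F) (Submodule.injective_subtype _) (cov_surj _)
          (LinearMap.exact_subtype_ker_map _) (fun u => hE (LinearMap.ker (cov R F)) (F →₀ R) (LinearMap.ker (cov R F)).subtype ?_ u) (EV_proj _)
    refine ⟨Submodule.injective_subtype _, fun Q _ _ => ?_⟩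
    exact LinearMap.lTensor_injective_of_exact_of_flat (cov R F) (cov_surj F) _
      (Submodule.injective_subtype _) (LinearMap.exact_subtype_ker_map _) Q
  | succ j ih =>
    intro F _ _ _
    have := flat_ker (cov R F) (cov_surj F)
    exact EV_ses3 _ (cov R F) (Submodule.injective_subtype _) (cov_surj _)
          (LinearMap.exact_subtype_ker_map _) (ih _) (EV_proj _)

/-- Modules over a flat algebra `S` with `Hom(S,E)=0`. -/
lemma EV_alg (hE : PureInjective R E) (S : Type) [CommRing S] [Algebra R S] [Module.Flat R S]
    (hS : ∀ f : S →ₗ[R] E, f = 0) (j : ℕ) : ∀ (M : Type) [AddCommGroup M] [Module R M]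
    [Module S M] [IsScalarTower R S M], EV R M E j := by
  have hfree : ∀ ι : Type, EV R (ι →₀ S) E 0 := by
    intro ι
    rw [EV_zero_iff]
    intro f
    apply Finsupp.lhom_ext'
    intro i
    exact hS _
  induction j with
  | zero =>
    intro M _ _ _ _
    rw [EV_zero_iff]
    intro f
    have h := EV_zero_iff.1 (hfree M) (f.comp ((cov S M).restrictScalars R))
    ext x
    obtain ⟨y, rfl⟩ := cov_surj (R := S) M x
    exact DFunLike.congr_fun h y
  | succ j ih =>
    intro M _ _ _ _
    have : Module.Flat R (M →₀ S) := Module.Flat.trans R S (M →₀ S)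
    refine EV_ses3 (A := LinearMap.ker (cov S M)) ((LinearMap.ker (cov S M)).subtype.restrictScalars R)
      ((cov S M).restrictScalars R) (Submodule.injective_subtype _) (cov_surj (R := S) M)
      (LinearMap.exact_subtype_ker_map (cov S M)) (ih _) (EV_flat hE j _)

/-- torsion `R/p`-modules -/
lemma EV_tors (p : Ideal R) [p.IsPrime] (hp : ∀ J : Ideal R, p < J → ∀ j, EV R (R ⧸ J) E j)
    (j : ℕ) : ∀ (M : Type) [AddCommGroup M] [Module R M],
    (∀ x : M, ∀ r ∈ p, r • x = 0) → (∀ x : M, ∃ s ∉ p, s • x = 0) → EV R M E j := by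
  classical
  have hcyc : ∀ (M : Type) [AddCommGroup M] [Module R M],
    (∀ x : M, ∀ r ∈ p, r • x = 0) → (∀ x : M, ∃ s ∉ p, s • x = 0) → ∀ x : M, ∀ j,
      EV R (R ⧸ LinearMap.ker (LinearMap.toSpanSingleton R M x)) E j := by
    intro M _ _ h1 h2 x j
    apply hp
    obtain ⟨s, hs, hsx⟩ := h2 x
    refine lt_of_le_of_ne (fun r hr => by simpa using h1 x r hr) ?_
    rintro h
    apply hs
    rw [h]
    simpa using hsx
  induction j with
  | zero =>
    intro M _ _ h1 h2
    rw [EV_zero_iff]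
    intro f
    ext x
    have := EV_zero_iff.1 (hcyc M h1 h2 x 0) (f.comp ((LinearMap.ker (LinearMap.toSpanSingleton R M x)).liftQ (LinearMap.toSpanSingleton R M x) le_rfl))
    have h3 := DFunLike.congr_fun this (Submodule.Quotient.mk 1)
    rw [LinearMap.comp_apply, Submodule.liftQ_apply] at h3
    simpa using h3
  | succ j ih =>
    intro M _ _ h1 h2
    let g : (Π₀ x : M, R ⧸ LinearMap.ker (LinearMap.toSpanSingleton R M x)) →ₗ[R] M :=
      DFinsupp.lsum ℕ fun x => (LinearMap.ker (LinearMap.toSpanSingleton R M x)).liftQ (LinearMap.toSpanSingleton R M x) le_rfl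
    have hg : Function.Surjective g := by
      intro x
      refine ⟨DFinsupp.single x (Submodule.Quotient.mk 1), ?_⟩
      simp only [g, DFinsupp.lsum_single, Submodule.liftQ_apply]
      simp
    have h1' : ∀ y : (Π₀ x : M, R ⧸ LinearMap.ker (LinearMap.toSpanSingleton R M x)), ∀ r ∈ p, r • y = 0 := by
      intro y r hr
      ext x : 1
      obtain ⟨t, ht⟩ := Submodule.Quotient.mk_surjective _ (y x)
      rw [DFinsupp.smul_apply, ← ht, ← Submodule.Quotient.mk_smul, DFinsupp.zero_apply,
        Submodule.Quotient.mk_eq_zero]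
      simp [mul_smul, h1 _ r hr]
    have h2' : ∀ y : (Π₀ x : M, R ⧸ LinearMap.ker (LinearMap.toSpanSingleton R M x)), ∃ s ∉ p, s • y = 0 := by
      intro y
      choose s hs hsx using h2
      refine ⟨∏ x ∈ y.support, s x, ?_, ?_⟩
      · rw [Ideal.IsPrime.prod_mem_iff]
        push Not
        intro x _; exact hs x
      · ext x : 1
        rw [DFinsupp.smul_apply, DFinsupp.zero_apply]
        by_cases hx : x ∈ y.support
        · obtain ⟨t, ht⟩ := Submodule.Quotient.mk_surjective _ (y x)
          rw [← ht, ← Submodule.Quotient.mk_smul,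
            Submodule.Quotient.mk_eq_zero, ← Finset.prod_erase_mul _ _ hx]
          simp only [smul_eq_mul, LinearMap.mem_ker, LinearMap.toSpanSingleton_apply]
          rw [mul_comm, mul_smul, mul_smul, hsx, smul_zero, smul_zero]
        · simp at hx
          rw [hx, smul_zero]
    refine EV_ses3 _ g (Submodule.injective_subtype _) hg
          (LinearMap.exact_subtype_ker_map _) (ih (LinearMap.ker g) ?_ ?_) (EV_dfinsupp _ _ _ fun x => hcyc M h1 h2 x _)
    · intro x r hr
      exact Subtype.ext (h1' x r hr)
    · intro x
      obtain ⟨s, hs, h⟩ := h2' x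
      exact ⟨s, hs, Subtype.ext h⟩

lemma EV_quot [IsNoetherianRing R] (hE : PureInjective R E)
    (hm : ∀ (𝔪 : PrimeSpectrum R), 𝔪.asIdeal.IsMaximal →
      ∀ f : Localization.AtPrime 𝔪.asIdeal →ₗ[R] E, f = 0) (I : Ideal R) :
    ∀ j, EV R (R ⧸ I) E j := by
  induction I using WellFoundedGT.induction with
  | ind I ih =>
  intro j
  by_cases hI : I = ⊤
  · subst hI
    have hs : Subsingleton (R ⧸ (⊤ : Ideal R)) := Ideal.Quotient.subsingleton_iff.2 rfl
    have : Module.Projective R (R ⧸ (⊤ : Ideal R)) := inferInstance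
    cases j with
    | zero => rw [EV_zero_iff]; intro f; refine LinearMap.ext fun x => ?_; rw [Subsingleton.elim x 0]; simp
    | succ j => exact EV_proj j
  by_cases hpr : I.IsPrime
  · obtain ⟨m, hmm, hIm⟩ := Ideal.exists_le_maximal I hI
    have hmp : m.IsPrime := hmm.isPrime
    let K := FractionRing (R ⧸ I)
    have hu : ∀ y : m.primeCompl, IsUnit (algebraMap R K y) := by
      intro y
      rw [isUnit_iff_ne_zero, IsScalarTower.algebraMap_apply R (R ⧸ I) K]
      intro h
      rw [map_eq_zero_iff _ (IsFractionRing.injective (R ⧸ I) K)] at h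
      exact y.2 (hIm (Ideal.Quotient.eq_zero_iff_mem.1 h))
    let : Module (Localization.AtPrime m) K :=
      Module.compHom K (IsLocalization.lift (M := m.primeCompl) (S := Localization.AtPrime m) hu)
    have : IsScalarTower R (Localization.AtPrime m) K := by
      refine ⟨fun r s x => ?_⟩
      change IsLocalization.lift hu (r • s) * x = r • (IsLocalization.lift hu s * x)
      rw [Algebra.smul_def, map_mul, IsLocalization.lift_eq, mul_assoc, Algebra.smul_def]
    have : Module.Flat R (Localization.AtPrime m) := IsLocalization.flat _ m.primeCompl
    have hK : EV R K E j := EV_alg hE (Localization.AtPrime m) (hm ⟨m, hmp⟩ hmm) j K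
    let f : (R ⧸ I) →ₗ[R] K := (Algebra.linearMap (R ⧸ I) K).restrictScalars R
    have hf : Function.Injective f := IsFractionRing.injective (R ⧸ I) K
    refine EV_ses1 f (LinearMap.range f).mkQ hf (Submodule.mkQ_surjective _)
      (LinearMap.exact_map_mkQ_range f) hK (EV_tors I (fun J hJ j => ih J hJ j) (j+1) _ ?_ ?_)
    · intro x r hr
      obtain ⟨x, rfl⟩ := Submodule.mkQ_surjective _ x
      rw [← map_smul]
      have : r • x = 0 := by
        rw [Algebra.smul_def, IsScalarTower.algebraMap_apply R (R ⧸ I) K]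
        have : algebraMap R (R ⧸ I) r = 0 := Ideal.Quotient.eq_zero_iff_mem.2 hr
        rw [this]; simp
      rw [this, map_zero]
    · intro x
      obtain ⟨x, rfl⟩ := Submodule.mkQ_surjective _ x
      obtain ⟨a, b, hb, rfl⟩ := IsFractionRing.div_surjective (A := R ⧸ I) x
      obtain ⟨s, rfl⟩ := Ideal.Quotient.mk_surjective b
      refine ⟨s, ?_, ?_⟩
      · intro hs
        exact (mem_nonZeroDivisors_iff_ne_zero.1 hb) (Ideal.Quotient.eq_zero_iff_mem.2 hs)
      · rw [← map_smul, Submodule.mkQ_apply, Submodule.Quotient.mk_eq_zero]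
        refine ⟨a, ?_⟩
        have hb0 : algebraMap (R ⧸ I) K (Ideal.Quotient.mk I s) ≠ 0 := by
          intro h
          rw [map_eq_zero_iff _ (IsFractionRing.injective (R ⧸ I) K)] at h
          exact (mem_nonZeroDivisors_iff_ne_zero.1 hb) h
        rw [Algebra.smul_def, IsScalarTower.algebraMap_apply R (R ⧸ I) K]
        change algebraMap (R ⧸ I) K a = algebraMap (R ⧸ I) K (Ideal.Quotient.mk I s) * _
        rw [mul_div_assoc', mul_div_cancel_left₀ _ hb0]
  · rw [Ideal.isPrime_iff] at hpr
    push Not at hpr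
    obtain ⟨a, b, hab, ha, hb⟩ := hpr hI
    let J : Ideal R := I ⊔ Ideal.span {a}
    let L : Ideal R := LinearMap.ker ((Submodule.mkQ I).comp (LinearMap.toSpanSingleton R R a))
    have hL : ∀ r, r ∈ L ↔ r * a ∈ I := by
      intro r
      simp only [L, LinearMap.mem_ker, LinearMap.comp_apply, LinearMap.toSpanSingleton_apply,
        Submodule.mkQ_apply, Submodule.Quotient.mk_eq_zero, smul_eq_mul]
    have hIJ : I ≤ J := le_sup_left
    let f : (R ⧸ L) →ₗ[R] (R ⧸ I) := L.liftQ _ le_rfl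
    let g : (R ⧸ I) →ₗ[R] (R ⧸ J) := Submodule.mapQ I J LinearMap.id hIJ
    refine EV_ses2 f g ?_ ?_ ?_ (ih L ?_ j) (ih J ?_ j)
    · rw [← LinearMap.ker_eq_bot]
      exact Submodule.ker_liftQ_eq_bot _ _ _ le_rfl
    · intro x
      obtain ⟨x, rfl⟩ := Submodule.Quotient.mk_surjective _ x
      exact ⟨Submodule.Quotient.mk x, rfl⟩
    · intro x
      obtain ⟨x, rfl⟩ := Submodule.Quotient.mk_surjective _ x
      change Submodule.Quotient.mk x = 0 ↔ _
      rw [Submodule.Quotient.mk_eq_zero, Submodule.mem_sup]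
      constructor
      · rintro ⟨y, hy, z, hz, rfl⟩
        obtain ⟨t, rfl⟩ := Ideal.mem_span_singleton'.1 hz
        refine ⟨Submodule.Quotient.mk t, ?_⟩
        change Submodule.Quotient.mk (t • a) = _
        rw [Submodule.Quotient.eq]
        simpa using hy
      · rintro ⟨t, ht⟩
        obtain ⟨t, rfl⟩ := Submodule.Quotient.mk_surjective _ t
        change Submodule.Quotient.mk (t • a) = _ at ht
        rw [Submodule.Quotient.eq] at ht
        refine ⟨_, I.neg_mem ht, t * a, Ideal.mem_span_singleton'.2 ⟨t, rfl⟩, ?_⟩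
        simp
    · refine lt_of_le_of_ne (fun r hr => (hL r).2 (I.mul_mem_right _ hr)) ?_
      intro h
      apply hb
      rw [h, hL, mul_comm]; exact hab
    · refine lt_of_le_of_ne hIJ ?_
      intro h
      apply ha
      rw [h]
      exact Ideal.mem_sup_right (Ideal.mem_span_singleton_self a)

/-- The key lemma. -/
lemma key [IsNoetherianRing R] (hE : PureInjective R E)
    (hm : ∀ (𝔪 : PrimeSpectrum R), 𝔪.asIdeal.IsMaximal →
      ∀ f : Localization.AtPrime 𝔪.asIdeal →ₗ[R] E, f = 0) (x : E) : x = 0 := by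
  have h := EV_quot hE hm ⊥ 0
  rw [EV_zero_iff] at h
  have := h ((⊥ : Ideal R).liftQ (LinearMap.toSpanSingleton R E x) bot_le)
  have h3 := DFunLike.congr_fun this (Submodule.Quotient.mk 1)
  rw [Submodule.liftQ_apply] at h3
  simpa using h3

end keyLemma
section dualPart

open TensorProduct

variable {R : Type} [CommRing R]

lemma char_extend {X Y : Type} [AddCommGroup X] [Module R X] [AddCommGroup Y] [Module R Y]
    (u : X →ₗ[R] Y) (χ : CharacterModule X) (h : ∀ x, u x = 0 → χ x = 0) :
    ∃ γ : CharacterModule Y, ∀ x, γ (u x) = χ x := by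
  let u' : X →ₗ[ℤ] Y := u.toAddMonoidHom.toIntLinearMap
  let χ' : X →ₗ[ℤ] AddCircle (1 : ℚ) := AddMonoidHom.toIntLinearMap χ
  have hle : LinearMap.ker u' ≤ LinearMap.ker χ' := fun x hx => h x hx
  let i : (X ⧸ LinearMap.ker u') →ₗ[ℤ] Y := (LinearMap.ker u').liftQ u' le_rfl
  have hi : Function.Injective i := by
    rw [← LinearMap.ker_eq_bot]
    exact Submodule.ker_liftQ_eq_bot _ _ _ le_rfl
  let χq : CharacterModule (X ⧸ LinearMap.ker u') :=
    ((LinearMap.ker u').liftQ χ' hle).toAddMonoidHom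
  obtain ⟨γ, hγ⟩ := CharacterModule.dual_surjective_of_injective i hi χq
  exact ⟨γ, fun x => DFunLike.congr_fun hγ (Submodule.Quotient.mk x)⟩

lemma factor_inj {X Y Z : Type} [AddCommGroup X] [Module R X] [AddCommGroup Y] [Module R Y]
    [AddCommGroup Z] [Module R Z] (i : X →ₗ[R] Y) (hi : Function.Injective i) (f : Z →ₗ[R] Y)
    (h : ∀ z, ∃ x, i x = f z) : ∃ g : Z →ₗ[R] X, ∀ z, i (g z) = f z := by
  refine ⟨(LinearEquiv.ofInjective i hi).symm.toLinearMap.comp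
    (f.codRestrict (LinearMap.range i) h), fun z => ?_⟩
  have := (LinearEquiv.ofInjective i hi).apply_symm_apply
    (f.codRestrict (LinearMap.range i) h z)
  exact congrArg Subtype.val this

lemma factor_surj {X Y Z : Type} [AddCommGroup X] [Module R X] [AddCommGroup Y] [Module R Y]
    [AddCommGroup Z] [Module R Z] (p : X →ₗ[R] Y) (hp : Function.Surjective p) (f : X →ₗ[R] Z)
    (h : ∀ x, p x = 0 → f x = 0) : ∃ g : Y →ₗ[R] Z, ∀ x, g (p x) = f x := by
  refine ⟨((LinearMap.ker p).liftQ f h).comp (p.quotKerEquivOfSurjective hp).symm.toLinearMap,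
    fun x => ?_⟩
  have : (p.quotKerEquivOfSurjective hp).symm (p x) = Submodule.Quotient.mk x := by
    rw [LinearEquiv.symm_apply_eq]; rfl
  simp only [LinearMap.comp_apply, LinearEquiv.coe_coe, this]
  rfl

lemma pureInj_char (H : Type) [AddCommGroup H] [Module R H] :
    PureInjective R (CharacterModule H) := by
  intro A B _ _ _ _ f hf g
  have h : Function.Injective (f.rTensor H) := by
    rw [← LinearMap.lTensor_inj_iff_rTensor_inj]
    exact hf.2 H
  exact rTensor_injective_iff_lcomp_surjective.1 h g

lemma pureInj_retract {E D : Type} [AddCommGroup E] [Module R E] [AddCommGroup D] [Module R D]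
    (hD : PureInjective R D) (σ : E →ₗ[R] D) (τ : D →ₗ[R] E) (h : ∀ x, τ (σ x) = x) :
    PureInjective R E := by
  intro A B _ _ _ _ f hf g
  obtain ⟨k, hk⟩ := hD A B f hf (σ.comp g)
  refine ⟨τ.comp k, ?_⟩
  rw [LinearMap.comp_assoc, hk]
  ext x
  exact h _

/-- evaluation into the double dual -/
def evDD (R N : Type) [CommRing R] [AddCommGroup N] [Module R N] :
    N →ₗ[R] CharacterModule (CharacterModule N) where
  toFun n := (AddMonoidHom.eval n : (N →+ AddCircle (1 : ℚ)) →+ AddCircle (1 : ℚ))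
  map_add' x y := by
    apply CharacterModule.ext
    intro l
    exact map_add l x y
  map_smul' r x := by
    apply CharacterModule.ext
    intro l
    rfl

lemma evDD_apply {N : Type} [AddCommGroup N] [Module R N] (n : N) (l : CharacterModule N) :
    evDD R N n l = l n := rfl

lemma evDD_pure (N : Type) [AddCommGroup N] [Module R N] : IsPureMono R (evDD R N) := by
  refine ⟨?_, ?_⟩
  · rw [injective_iff_map_eq_zero]
    intro n hn
    refine CharacterModule.eq_zero_of_character_apply fun c => ?_
    rw [← evDD_apply (R := R), hn]; rfl
  · intro Q _ _
    rw [injective_iff_map_eq_zero]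
    intro t ht
    refine CharacterModule.eq_zero_of_character_apply fun χ => ?_
    let c : Q →ₗ[R] CharacterModule N := CharacterModule.curry χ
    let χ' : CharacterModule (Q ⊗[R] CharacterModule (CharacterModule N)) :=
      CharacterModule.uncurry ((evDD R (CharacterModule N)).comp c)
    have : ∀ t : Q ⊗[R] N, χ' ((evDD R N).lTensor Q t) = χ t := by
      intro t
      induction t with
      | zero => simp
      | add x y hx hy => rw [map_add, map_add, map_add, hx, hy]
      | tmul q n => rfl
    rw [← this, ht, map_zero]

lemma exists_retr {N : Type} [AddCommGroup N] [Module R N] (hN : PureInjective R N) :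
    ∃ ρ : CharacterModule (CharacterModule N) →ₗ[R] N, ∀ n, ρ (evDD R N n) = n := by
  obtain ⟨ρ, h⟩ := hN _ _ _ (evDD_pure N) LinearMap.id
  exact ⟨ρ, fun n => DFunLike.congr_fun h n⟩

variable {A B C : Type} [AddCommGroup A] [Module R A] [AddCommGroup B] [Module R B]
  [AddCommGroup C] [Module R C]

/-- Exactness in the middle after applying `Hom(-,N)`. -/
def Vex (a : A →ₗ[R] B) (b : B →ₗ[R] C) (N : Type) [AddCommGroup N] [Module R N] : Prop :=
  ∀ f : B →ₗ[R] N, f.comp a = 0 → ∃ g : C →ₗ[R] N, g.comp b = f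

lemma vex_hom (a : A →ₗ[R] B) (b : B →ₗ[R] C) {N : Type} [AddCommGroup N] [Module R N]
    (hN : PureInjective R N) (F : Type) [AddCommGroup F] [Module R F] [Module.Flat R F]
    (h : Vex a b N) : Vex a b (F →ₗ[R] N) := by
  intro f hf
  obtain ⟨ρ, hρ⟩ := exists_retr hN
  let L := CharacterModule N
  let bL : B ⊗[R] L →ₗ[R] C ⊗[R] L := b.rTensor L
  -- the character of F ⊗ (B ⊗ L)
  let f' : F →ₗ[R] B →ₗ[R] N := f.flip
  let φ : F →ₗ[R] CharacterModule (B ⊗[R] L) :=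
    CharacterModule.uncurry.comp ((LinearMap.llcomp R B N _ (evDD R N)).comp f')
  have hφt : ∀ x y (l : L), φ x (y ⊗ₜ l) = l (f y x) := fun x y l => rfl
  have hφ : ∀ x z, bL z = 0 → φ x z = 0 := by
    intro x z hz
    have h1 : (f' x).comp a = 0 := by
      ext y
      exact DFunLike.congr_fun (DFunLike.congr_fun hf y) x
    obtain ⟨g, hg⟩ := h (f' x) h1
    have : ∀ z, φ x z = CharacterModule.uncurry ((evDD R N).comp g) (bL z) := by
      intro z
      induction z with
      | zero => rw [map_zero, map_zero, map_zero]
      | add u v hu hv => rw [map_add, map_add, map_add, hu, hv]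
      | tmul y l =>
        rw [hφt]
        change l (f' x y) = l (g (b y))
        rw [← hg]; rfl
    rw [this, hz, map_zero]
  let Φ : CharacterModule (F ⊗[R] (B ⊗[R] L)) := CharacterModule.uncurry φ
  have hΦ : ∀ t, bL.lTensor F t = 0 → Φ t = 0 := by
    intro t ht
    have hex : Function.Exact ((LinearMap.ker bL).subtype.lTensor F) (bL.lTensor F) :=
      Module.Flat.lTensor_exact F (LinearMap.exact_subtype_ker_map bL)
    obtain ⟨s, rfl⟩ := (hex t).1 ht
    clear ht
    induction s with
    | zero => rw [map_zero, map_zero]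
    | add u v hu hv => rw [map_add, map_add, hu, hv, add_zero]
    | tmul x z => exact hφ x z z.2
  obtain ⟨Γ, hΓ⟩ := char_extend (bL.lTensor F) Φ hΦ
  let γ : F →ₗ[R] C →ₗ[R] CharacterModule L := CharacterModule.curry.comp (CharacterModule.curry Γ)
  let g : F →ₗ[R] C →ₗ[R] N := (LinearMap.llcomp R C _ N ρ).comp γ
  refine ⟨g.flip, ?_⟩
  ext y x
  change ρ (γ x (b y)) = f y x
  have : γ x (b y) = evDD R N (f y x) := by
    apply CharacterModule.ext
    intro l
    exact hΓ (x ⊗ₜ (y ⊗ₜ l))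
  rw [this, hρ]

/-- cocycles -/
abbrev Zc (a : A →ₗ[R] B) (N : Type) [AddCommGroup N] [Module R N] : Submodule R (B →ₗ[R] N) :=
  LinearMap.ker (LinearMap.lcomp R N a)

/-- coboundaries -/
abbrev Bc (a : A →ₗ[R] B) (b : B →ₗ[R] C) (N : Type) [AddCommGroup N] [Module R N] :
    Submodule R (Zc a N) :=
  (LinearMap.range (LinearMap.lcomp R N b)).comap (Zc a N).subtype

/-- homology after tensoring -/
abbrev Hc (a : A →ₗ[R] B) (b : B →ₗ[R] C) (L : Type) [AddCommGroup L] [Module R L] : Type :=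
  LinearMap.ker (b.rTensor L) ⧸
    (LinearMap.range (a.rTensor L)).comap (LinearMap.ker (b.rTensor L)).subtype

variable (a : A →ₗ[R] B) (b : B →ₗ[R] C)

lemma exists_pi (hab : b.comp a = 0) (L : Type) [AddCommGroup L] [Module R L] :
    ∃ π : Zc a (CharacterModule L) →ₗ[R] CharacterModule (Hc a b L),
      ∀ f z, π f (Submodule.Quotient.mk z) = CharacterModule.uncurry f.1 z.1 := by
  let K := LinearMap.ker (b.rTensor L)
  let I := (LinearMap.range (a.rTensor L)).comap K.subtype
  obtain ⟨π, hπ⟩ := factor_inj (CharacterModule.dual I.mkQ)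
    (CharacterModule.dual_injective_of_surjective _ (Submodule.mkQ_surjective I))
    ((CharacterModule.dual K.subtype).comp
      (CharacterModule.uncurry.comp (Zc a (CharacterModule L)).subtype)) (by
      intro f
      have h0 : ∀ s, CharacterModule.uncurry f.1 (a.rTensor L s) = 0 := by
        intro s
        induction s with
        | zero => rw [map_zero, map_zero]
        | add u v hu hv => rw [map_add, map_add, hu, hv, add_zero]
        | tmul x l =>
          change f.1 (a x) l = 0
          have : f.1 (a x) = 0 := DFunLike.congr_fun f.2 x
          rw [this]; rfl
      obtain ⟨γ, hγ⟩ := char_extend I.mkQ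
        (CharacterModule.dual K.subtype (CharacterModule.uncurry f.1)) (by
          intro z hz
          rw [Submodule.mkQ_apply, Submodule.Quotient.mk_eq_zero] at hz
          obtain ⟨s, hs⟩ := hz
          change CharacterModule.uncurry f.1 (K.subtype z) = 0
          rw [← hs, h0])
      refine ⟨γ, ?_⟩
      apply CharacterModule.ext
      exact hγ)
  exact ⟨π, fun f z => DFunLike.congr_fun (hπ f) z⟩

variable {a b}

lemma pi_ker {L : Type} [AddCommGroup L] [Module R L]
    {π : Zc a (CharacterModule L) →ₗ[R] CharacterModule (Hc a b L)}
    (hπ : ∀ f z, π f (Submodule.Quotient.mk z) = CharacterModule.uncurry f.1 z.1)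
    (f : Zc a (CharacterModule L)) (hf : π f = 0) :
    ∃ g : C →ₗ[R] CharacterModule L, g.comp b = f.1 := by
  obtain ⟨γ, hγ⟩ := char_extend (b.rTensor L) (CharacterModule.uncurry f.1) (by
    intro z hz
    have := hπ f ⟨z, hz⟩
    rw [hf] at this
    exact this.symm)
  refine ⟨CharacterModule.curry γ, ?_⟩
  refine LinearMap.ext fun y => CharacterModule.ext _ fun l => ?_
  exact hγ (y ⊗ₜ l)

lemma pi_bdry {L : Type} [AddCommGroup L] [Module R L]
    {π : Zc a (CharacterModule L) →ₗ[R] CharacterModule (Hc a b L)}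
    (hπ : ∀ f z, π f (Submodule.Quotient.mk z) = CharacterModule.uncurry f.1 z.1)
    (f : Zc a (CharacterModule L)) (g : C →ₗ[R] CharacterModule L) (hg : g.comp b = f.1) :
    π f = 0 := by
  apply CharacterModule.ext
  intro z
  obtain ⟨z, rfl⟩ := Submodule.Quotient.mk_surjective _ z
  rw [hπ]
  have : ∀ z, CharacterModule.uncurry f.1 z = CharacterModule.uncurry g (b.rTensor L z) := by
    intro z
    induction z with
    | zero => rw [map_zero, map_zero, map_zero]
    | add u v hu hv => rw [map_add, map_add, map_add, hu, hv]
    | tmul y l => rw [← hg]; rfl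
  have hz : b.rTensor L z.1 = 0 := z.2
  rw [this, hz, map_zero]
  rfl

lemma pi_lift (hab : b.comp a = 0) {L : Type} [AddCommGroup L] [Module R L]
    {π : Zc a (CharacterModule L) →ₗ[R] CharacterModule (Hc a b L)}
    (hπ : ∀ f z, π f (Submodule.Quotient.mk z) = CharacterModule.uncurry f.1 z.1)
    (F : Type) [AddCommGroup F] [Module R F] [Module.Flat R F]
    (θ : F →ₗ[R] CharacterModule (Hc a b L)) :
    ∃ φ : F →ₗ[R] Zc a (CharacterModule L), ∀ x, π (φ x) = θ x := by
  let K := LinearMap.ker (b.rTensor L)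
  let I := (LinearMap.range (a.rTensor L)).comap K.subtype
  let θ' : F →ₗ[R] CharacterModule K := (CharacterModule.dual I.mkQ).comp θ
  have hinj : Function.Injective (K.subtype.lTensor F) :=
    Module.Flat.lTensor_preserves_injective_linearMap _ (Submodule.injective_subtype _)
  obtain ⟨Γ, hΓ⟩ := CharacterModule.dual_surjective_of_injective _ hinj (CharacterModule.uncurry θ')
  let φ' : F →ₗ[R] CharacterModule (B ⊗[R] L) := CharacterModule.curry Γ
  have hφ' : ∀ x (z : K), φ' x z.1 = θ x (Submodule.Quotient.mk z) := fun x z =>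
    DFunLike.congr_fun hΓ (x ⊗ₜ z)
  have hba : ∀ s, a.rTensor L s ∈ K := by
    intro s
    rw [LinearMap.mem_ker, ← LinearMap.comp_apply, ← LinearMap.rTensor_comp, hab]
    simp
  let φ : F →ₗ[R] Zc a (CharacterModule L) :=
    (CharacterModule.curry.comp φ').codRestrict _ (by
      intro x
      rw [LinearMap.mem_ker]
      refine LinearMap.ext fun y => CharacterModule.ext _ fun l => ?_
      have h1 := hφ' x ⟨_, hba (y ⊗ₜ l)⟩
      have h2 : (Submodule.Quotient.mk ⟨_, hba (y ⊗ₜ l)⟩ : K ⧸ I) = 0 := by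
        rw [Submodule.Quotient.mk_eq_zero]
        exact ⟨y ⊗ₜ l, rfl⟩
      have h3 : θ x (Submodule.Quotient.mk ⟨_, hba (y ⊗ₜ l)⟩) = 0 := by
        erw [h2]; exact map_zero _
      exact h1.trans h3)
  refine ⟨φ, fun x => ?_⟩
  apply CharacterModule.ext
  intro z
  obtain ⟨z, rfl⟩ := Submodule.Quotient.mk_surjective _ z
  rw [hπ, ← hφ']
  have : ∀ t, CharacterModule.uncurry (CharacterModule.curry (φ' x)) t = φ' x t :=
    fun t => DFunLike.congr_fun (CharacterModule.homEquiv.apply_symm_apply (φ' x)) t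
  exact this z.1

lemma vex_of_local [IsNoetherianRing R] (hab : b.comp a = 0)
    {N : Type} [AddCommGroup N] [Module R N] (hN : PureInjective R N)
    (h : ∀ (𝔪 : PrimeSpectrum R), 𝔪.asIdeal.IsMaximal →
      Vex a b (Localization.AtPrime 𝔪.asIdeal →ₗ[R] N)) : Vex a b N := by
  obtain ⟨ρ, hρ⟩ := exists_retr hN
  obtain ⟨π, hπ⟩ := exists_pi a b hab (CharacterModule N)
  have hsurj : Function.Surjective π := by
    intro χ
    obtain ⟨φ, hφ⟩ := pi_lift hab hπ R (LinearMap.toSpanSingleton R _ χ)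
    exact ⟨φ 1, by rw [hφ]; simp⟩
  -- push and pull on cocycles
  let up : Zc a N →ₗ[R] Zc a (CharacterModule (CharacterModule N)) :=
    (LinearMap.llcomp R B N _ (evDD R N)).restrict (by
      intro f hf
      refine LinearMap.ext fun y => ?_
      have : f (a y) = 0 := DFunLike.congr_fun hf y
      change evDD R N (f (a y)) = 0
      rw [this, map_zero])
  let dn : Zc a (CharacterModule (CharacterModule N)) →ₗ[R] Zc a N :=
    (LinearMap.llcomp R B _ N ρ).restrict (by
      intro f hf
      refine LinearMap.ext fun y => ?_
      have : f (a y) = 0 := DFunLike.congr_fun hf y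
      change ρ (f (a y)) = 0
      rw [this, map_zero])
  have hdu : ∀ f, dn (up f) = f := by
    intro f
    apply Subtype.ext
    refine LinearMap.ext fun y => ?_
    exact hρ _
  let ω : Zc a (CharacterModule (CharacterModule N)) →ₗ[R] (Zc a N ⧸ Bc a b N) :=
    (Bc a b N).mkQ.comp dn
  obtain ⟨τ, hτ⟩ := factor_surj π hsurj ω (by
    intro f hf
    obtain ⟨g, hg⟩ := pi_ker hπ f hf
    change (Bc a b N).mkQ (dn f) = 0
    rw [Submodule.mkQ_apply, Submodule.Quotient.mk_eq_zero]
    refine ⟨ρ.comp g, ?_⟩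
    refine LinearMap.ext fun y => ?_
    change ρ (g (b y)) = ρ (f.1 y)
    rw [← hg]; rfl)
  obtain ⟨σ, hσ⟩ := factor_surj (Bc a b N).mkQ (Submodule.mkQ_surjective _) (π.comp up) (by
    intro f hf
    rw [Submodule.mkQ_apply, Submodule.Quotient.mk_eq_zero] at hf
    obtain ⟨g, hg⟩ := hf
    refine pi_bdry hπ _ ((evDD R N).comp g) ?_
    refine LinearMap.ext fun y => ?_
    change evDD R N (g (b y)) = evDD R N (f.1 y)
    congr 1
    exact DFunLike.congr_fun hg y)
  have hτσ : ∀ e, τ (σ e) = e := by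
    intro e
    obtain ⟨f, rfl⟩ := Submodule.mkQ_surjective _ e
    rw [hσ, LinearMap.comp_apply, hτ, LinearMap.comp_apply, hdu]
  have hE : PureInjective R (Zc a N ⧸ Bc a b N) := pureInj_retract (pureInj_char _) σ τ hτσ
  have hz : ∀ e : Zc a N ⧸ Bc a b N, e = 0 := by
    refine key hE ?_
    intro 𝔪 hm ψ
    have : Module.Flat R (Localization.AtPrime 𝔪.asIdeal) := IsLocalization.flat _ 𝔪.asIdeal.primeCompl
    obtain ⟨φ, hφ⟩ := pi_lift hab hπ (Localization.AtPrime 𝔪.asIdeal) (σ.comp ψ)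
    let Ψ : Localization.AtPrime 𝔪.asIdeal →ₗ[R] B →ₗ[R] N := (Zc a N).subtype.comp (dn.comp φ)
    obtain ⟨g, hg⟩ := h 𝔪 hm Ψ.flip (by
      refine LinearMap.ext fun y => LinearMap.ext fun x => ?_
      exact DFunLike.congr_fun (dn (φ x)).2 y)
    refine LinearMap.ext fun x => ?_
    have h5 : π (φ x) = σ (ψ x) := hφ x
    rw [← hτσ (ψ x), ← h5, hτ, LinearMap.comp_apply,
      Submodule.mkQ_apply, LinearMap.zero_apply, Submodule.Quotient.mk_eq_zero]
    refine ⟨g.flip x, ?_⟩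
    refine LinearMap.ext fun y => ?_
    exact DFunLike.congr_fun (DFunLike.congr_fun hg y) x
  intro f hf
  have := hz (Submodule.Quotient.mk ⟨f, hf⟩)
  rw [Submodule.Quotient.mk_eq_zero] at this
  exact this

lemma vex_iff [IsNoetherianRing R] (hab : b.comp a = 0)
    {N : Type} [AddCommGroup N] [Module R N] (hN : PureInjective R N) :
    Vex a b N ↔ ∀ (𝔪 : PrimeSpectrum R), 𝔪.asIdeal.IsMaximal →
      Vex a b (Localization.AtPrime 𝔪.asIdeal →ₗ[R] N) := by
  refine ⟨fun h 𝔪 _ => ?_, vex_of_local hab hN⟩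
  have : Module.Flat R (Localization.AtPrime 𝔪.asIdeal) := IsLocalization.flat _ 𝔪.asIdeal.primeCompl
  exact vex_hom a b hN _ h

end dualPart
section final

variable {R : Type} [CommRing R]

lemma extV_iff (M : ModuleCat.{0} R) (P : ProjectiveResolution M) (i : ℕ)
    (N : Type) [AddCommGroup N] [Module R N] :
    extV R M (ModuleCat.of R N) i ↔
      Vex (P.complex.d ((ComplexShape.up ℕ).next i) i).hom
        (P.complex.d i ((ComplexShape.up ℕ).prev i)).hom N := by
  unfold extV
  rw [← ModuleCat.isZero_iff_subsingleton,
    (P.isoExt (R := ℤ) i (ModuleCat.of R N)).isZero_iff,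
    ← HomologicalComplex.exactAt_iff_isZero_homology, HomologicalComplex.exactAt_iff,
    ShortComplex.moduleCat_exact_iff]
  constructor
  · intro h f hf
    obtain ⟨g, hg⟩ := h (ModuleCat.ofHom f) (by
      change P.complex.d ((ComplexShape.up ℕ).next i) i ≫ ModuleCat.ofHom f = 0
      ext1
      exact hf)
    change P.complex.d i ((ComplexShape.up ℕ).prev i) ≫ (g : _ ⟶ ModuleCat.of R N) = _ at hg
    exact ⟨ModuleCat.Hom.hom g, congrArg ModuleCat.Hom.hom hg⟩
  · intro h f hf
    change P.complex.X i ⟶ ModuleCat.of R N at f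
    change P.complex.d ((ComplexShape.up ℕ).next i) i ≫ f = 0 at hf
    obtain ⟨g, hg⟩ := h f.hom (congrArg ModuleCat.Hom.hom hf)
    refine ⟨ModuleCat.ofHom g, ?_⟩
    change P.complex.d i ((ComplexShape.up ℕ).prev i) ≫ ModuleCat.ofHom g = f
    ext1
    exact hg

end final

/-- for a commutative noetherian ring `R`, a pure-injective module `N`, `i ≥ 0`
and any module `M`, `Ext^i_R(M, N) = 0` iff `Ext^i_R(M, Hom_R(R_𝔪, N)) = 0` for every
maximal ideal `𝔪`. -/
theorem stmt5 (R : Type) [CommRing R] [IsNoetherianRing R]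
    (N : Type) [AddCommGroup N] [Module R N] (hN : PureInjective R N)
    (i : ℕ) (M : ModuleCat.{0} R) :
    extV R M (ModuleCat.of R N) i ↔
      ∀ (𝔪 : PrimeSpectrum R), 𝔪.asIdeal.IsMaximal →
        extV R M (ModuleCat.of R (Localization.AtPrime 𝔪.asIdeal →ₗ[R] N)) i := by
  let P := projectiveResolution M
  rw [extV_iff M P i N, vex_iff (by
    rw [← ModuleCat.hom_comp, P.complex.d_comp_d]; rfl) hN]
  exact forall_congr' fun 𝔪 => forall_congr' fun _ => (extV_iff M P i _).symm
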